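/- For λ = 3/4 and every complex polynomial v = v(q) in the single variable q (regarded as a polynomial in x, y, q constant in x and y), the element X_s v = y ∂_q v + i x q v is a singular vector: (∂_x(x∂_x + y∂_y − 1/2) + (1/2)q(i q ∂_y − ∂_x ∂_q))(X_s v) = 0 and (∂_y(x∂_x + y∂_y − 1/2) − (i/2)∂_q(i q ∂_y − ∂_x ∂_q))(X_s v) = 0. Hence the space Sol(g,p; ℂ[x,y] ⊗ ℂ[q]) of polynomial solutions annihilated by π̂_λ(e1) and π̂_λ(e2) is nontrivial for λ = 3/4 and contains the subspace X_s·ℂ[q]. -/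

import Mathlib

open MvPolynomial Complex

noncomputable section

/-- The space of complex polynomials in three variables `x = X 0`, `y = X 1`, `q = X 2`. -/
abbrev V : Type := MvPolynomial (Fin 3) ℂ

/-- Partial derivative `∂_x`. -/
def Dx : Module.End ℂ V := (pderiv (0 : Fin 3)).toLinearMap
/-- Partial derivative `∂_y`. -/
def Dy : Module.End ℂ V := (pderiv (1 : Fin 3)).toLinearMap
/-- Partial derivative `∂_q`. -/
def Dq : Module.End ℂ V := (pderiv (2 : Fin 3)).toLinearMap
/-- Multiplication by `x`. -/
def Mx : Module.End ℂ V := LinearMap.mulLeft ℂ (X 0)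
/-- Multiplication by `y`. -/
def My : Module.End ℂ V := LinearMap.mulLeft ℂ (X 1)
/-- Multiplication by `q`. -/
def Mq : Module.End ℂ V := LinearMap.mulLeft ℂ (X 2)

/-- `X = -y ∂_x - (i/2) q²`. -/
def opX : Module.End ℂ V := -(My * Dx) - (I / 2) • (Mq * Mq)
/-- `H = -x ∂_x + y ∂_y + q ∂_q + 1/2`. -/
def opH : Module.End ℂ V := -(Mx * Dx) + My * Dy + Mq * Dq + (1 / 2 : ℂ) • 1
/-- `Y = -x ∂_y - (i/2) ∂_q²`. -/
def opY : Module.End ℂ V := -(Mx * Dy) - (I / 2) • (Dq * Dq)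
/-- `E = x ∂_x + y ∂_y + 1/2`. -/
def opE : Module.End ℂ V := Mx * Dx + My * Dy + (1 / 2 : ℂ) • 1
/-- The symplectic Dirac operator `D_s = i q ∂_y - ∂_x ∂_q`. -/
def Ds : Module.End ℂ V := I • (Mq * Dy) - Dx * Dq
/-- `X_s = y ∂_q + i x q`. -/
def Xs : Module.End ℂ V := My * Dq + I • (Mx * Mq)
/-- `O1 = x² ∂_x + x y ∂_y - (1/2) x q ∂_q + (i/2) y ∂_q² + (1/2) x`. -/
def opO1 : Module.End ℂ V :=
  Mx * Mx * Dx + Mx * My * Dy - (1 / 2 : ℂ) • (Mx * Mq * Dq) + (I / 2) • (My * Dq * Dq)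
    + (1 / 2 : ℂ) • Mx
/-- `O2 = x y ∂_x + y² ∂_y + (1/2) y q ∂_q + (i/2) x q² + y`. -/
def opO2 : Module.End ℂ V :=
  Mx * My * Dx + My * My * Dy + (1 / 2 : ℂ) • (My * Mq * Dq) + (I / 2) • (Mx * Mq * Mq) + My

/-- The image in `V` of a one-variable polynomial `v(q)`, constant in `x` and `y`. -/
def ofQ (v : Polynomial ℂ) : V := Polynomial.aeval (X 2 : V) v

/-- `π̂_λ(e1)` at `λ = 3/4`. -/
def A1 : Module.End ℂ V :=
  Dx * (Mx * Dx + My * Dy + (1 / 4 - 3 / 4 : ℂ) • 1) + (1 / 2 : ℂ) • (Mq * Ds)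

/-- `π̂_λ(e2)` at `λ = 3/4`. -/
def A2 : Module.End ℂ V :=
  Dy * (Mx * Dx + My * Dy + (1 / 4 - 3 / 4 : ℂ) • 1) - (I / 2) • (Dq * Ds)

/-!
Commuting `X_s` past the coordinates and the partial derivatives yields `[E, X_s] = X_s` and
`[D_s, X_s] = -i (E + 1/2)`. A polynomial `f` killed by `∂_x` and `∂_y` satisfies `E f = f / 2` and
`D_s f = 0`, so `E (X_s f) = (3/2) X_s f` and `D_s (X_s f) = -i f`. At `λ = 3/4` the first factor in
`π̂_λ(e1)` and `π̂_λ(e2)` is `E - 1`, which acts on `X_s f` as `1/2`, and the two terms of each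
operator cancel. The formula for `D_s (X_s f)` also shows that `X_s` is injective on such `f`.
-/

theorem pderiv_pderiv_comm {σ R : Type*} [CommSemiring R] (i j : σ) (p : MvPolynomial σ R) :
    pderiv i (pderiv j p) = pderiv j (pderiv i p) := by
  rcases eq_or_ne i j with rfl | hij
  · rfl
  · ext m
    simp only [coeff_pderiv, Finsupp.add_apply, Finsupp.single_eq_of_ne hij,
      Finsupp.single_eq_of_ne hij.symm, add_zero, add_right_comm m, mul_right_comm]

theorem pderiv_X_mul_self {σ R : Type*} [CommSemiring R] (i : σ) (p : MvPolynomial σ R) :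
    pderiv i (X i * p) = X i * pderiv i p + p := by
  rw [pderiv_mul, pderiv_X_self, one_mul, add_comm]

theorem pderiv_X_mul_of_ne {σ R : Type*} [CommSemiring R] {i j : σ} (h : j ≠ i)
    (p : MvPolynomial σ R) : pderiv i (X j * p) = X j * pderiv i p := by
  rw [pderiv_mul, pderiv_X_of_ne h, zero_mul, zero_add]

theorem pderiv_aeval_X_of_ne {σ R : Type*} [CommSemiring R] {i j : σ} (h : j ≠ i)
    (v : Polynomial R) : pderiv i (Polynomial.aeval (X j : MvPolynomial σ R) v) = 0 := by
  rw [Derivation.map_aeval, pderiv_X_of_ne h, smul_zero]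

section WeylRelations

variable (p : V)

theorem Dx_Mx : Dx (Mx p) = Mx (Dx p) + p :=
  pderiv_X_mul_self 0 p

theorem Dx_My : Dx (My p) = My (Dx p) :=
  pderiv_X_mul_of_ne (by decide) p

theorem Dx_Mq : Dx (Mq p) = Mq (Dx p) :=
  pderiv_X_mul_of_ne (by decide) p

theorem Dy_Mx : Dy (Mx p) = Mx (Dy p) :=
  pderiv_X_mul_of_ne (by decide) p

theorem Dy_My : Dy (My p) = My (Dy p) + p :=
  pderiv_X_mul_self 1 p

theorem Dy_Mq : Dy (Mq p) = Mq (Dy p) :=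
  pderiv_X_mul_of_ne (by decide) p

theorem Dq_Mx : Dq (Mx p) = Mx (Dq p) :=
  pderiv_X_mul_of_ne (by decide) p

theorem Dq_My : Dq (My p) = My (Dq p) :=
  pderiv_X_mul_of_ne (by decide) p

theorem Dq_Mq : Dq (Mq p) = Mq (Dq p) + p :=
  pderiv_X_mul_self 2 p

theorem Dx_Dq : Dx (Dq p) = Dq (Dx p) :=
  pderiv_pderiv_comm 0 2 p

theorem Dy_Dq : Dy (Dq p) = Dq (Dy p) :=
  pderiv_pderiv_comm 1 2 p

theorem My_Mx : My (Mx p) = Mx (My p) :=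
  mul_left_comm _ _ p

theorem Mq_Mx : Mq (Mx p) = Mx (Mq p) :=
  mul_left_comm _ _ p

theorem Mq_My : Mq (My p) = My (Mq p) :=
  mul_left_comm _ _ p

end WeylRelations

section OperatorFormulas

variable (p : V)

theorem Xs_apply : Xs p = My (Dq p) + I • Mx (Mq p) := rfl

theorem Ds_apply : Ds p = I • Mq (Dy p) - Dx (Dq p) := rfl

theorem opE_apply : opE p = Mx (Dx p) + My (Dy p) + (1 / 2 : ℂ) • p := rfl

theorem opE_sub_one : opE - 1 = Mx * Dx + My * Dy + (1 / 4 - 3 / 4 : ℂ) • 1 := by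
  rw [opE]
  module

theorem A1_apply : A1 p = Dx (opE p - p) + (1 / 2 : ℂ) • Mq (Ds p) := by
  rw [A1, ← opE_sub_one]
  rfl

theorem A2_apply : A2 p = Dy (opE p - p) - (I / 2) • Dq (Ds p) := by
  rw [A2, ← opE_sub_one]
  rfl

end OperatorFormulas

section Commutation

variable (p : V)

theorem Mx_Xs : Mx (Xs p) = Xs (Mx p) := by
  simp only [Xs_apply, map_add, map_smul, Dq_Mx, My_Mx, Mq_Mx]

theorem My_Xs : My (Xs p) = Xs (My p) := by
  simp only [Xs_apply, map_add, map_smul, Dq_My, My_Mx, Mq_My]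

theorem Mq_Xs : Mq (Xs p) = Xs (Mq p) - My p := by
  simp only [Xs_apply, map_add, map_smul, Dq_Mq, Mq_Mx, Mq_My]
  module

theorem Dx_Xs : Dx (Xs p) = Xs (Dx p) + I • Mq p := by
  simp only [Xs_apply, map_add, map_smul, Dx_Mx, Dx_My, Dx_Mq, Dx_Dq]
  module

theorem Dy_Xs : Dy (Xs p) = Xs (Dy p) + Dq p := by
  simp only [Xs_apply, map_add, map_smul, Dy_Mx, Dy_My, Dy_Mq, Dy_Dq]
  module

theorem Dq_Xs : Dq (Xs p) = Xs (Dq p) + I • Mx p := by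
  simp only [Xs_apply, map_add, map_smul, Dq_Mx, Dq_My, Dq_Mq]
  module

theorem opE_Xs : opE (Xs p) = Xs (opE p) + Xs p :=
  calc opE (Xs p)
    _ = Xs (opE p) + (My (Dq p) + I • Mx (Mq p)) := by
      simp only [opE_apply, Dx_Xs, Dy_Xs, Mx_Xs, My_Xs, map_add, map_smul]
      module
    _ = Xs (opE p) + Xs p := by rw [Xs_apply p]

theorem Ds_Xs : Ds (Xs p) = Xs (Ds p) - I • (opE p + (1 / 2 : ℂ) • p) :=
  calc Ds (Xs p)
    _ = Xs (Ds p) - I • (Dx (Mx p) + My (Dy p)) := by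
      simp only [Ds_apply, Dx_Xs, Dy_Xs, Dq_Xs, Mq_Xs, map_add, map_sub, map_smul]
      module
    _ = Xs (Ds p) - I • (opE p + (1 / 2 : ℂ) • p) := by
      rw [Dx_Mx, opE_apply]
      module

end Commutation

section ConstantInXY

variable {f : V}

theorem opE_eq_half_smul (hx : Dx f = 0) (hy : Dy f = 0) : opE f = (1 / 2 : ℂ) • f := by
  rw [opE_apply, hx, hy, map_zero, map_zero, zero_add, zero_add]

theorem opE_Xs_sub_Xs (hx : Dx f = 0) (hy : Dy f = 0) :
    opE (Xs f) - Xs f = (1 / 2 : ℂ) • Xs f := by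
  rw [opE_Xs, opE_eq_half_smul hx hy, map_smul, add_sub_cancel_right]

theorem Ds_eq_zero (hx : Dx f = 0) (hy : Dy f = 0) : Ds f = 0 := by
  rw [Ds_apply, Dx_Dq, hx, hy, map_zero, map_zero, smul_zero, sub_zero]

theorem Ds_Xs_eq_neg_I_smul (hx : Dx f = 0) (hy : Dy f = 0) : Ds (Xs f) = -I • f := by
  rw [Ds_Xs, Ds_eq_zero hx hy, opE_eq_half_smul hx hy, map_zero]
  module

theorem Xs_ne_zero (hx : Dx f = 0) (hy : Dy f = 0) (hf : f ≠ 0) : Xs f ≠ 0 := by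
  intro h
  have hDs := Ds_Xs_eq_neg_I_smul hx hy
  simp [h, hf] at hDs

theorem A1_Xs_eq_zero (hx : Dx f = 0) (hy : Dy f = 0) : A1 (Xs f) = 0 :=
  calc A1 (Xs f)
    _ = (1 / 2 : ℂ) • Dx (Xs f) + (1 / 2 : ℂ) • Mq (-I • f) := by
      rw [A1_apply, opE_Xs_sub_Xs hx hy, Ds_Xs_eq_neg_I_smul hx hy, map_smul]
    _ = (1 / 2 : ℂ) • I • Mq f + (1 / 2 : ℂ) • Mq (-I • f) := by
      rw [Dx_Xs, hx, map_zero, zero_add]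
    _ = 0 := by
      rw [map_smul]
      module

theorem A2_Xs_eq_zero (hx : Dx f = 0) (hy : Dy f = 0) : A2 (Xs f) = 0 :=
  calc A2 (Xs f)
    _ = (1 / 2 : ℂ) • Dy (Xs f) - (I / 2) • Dq (-I • f) := by
      rw [A2_apply, opE_Xs_sub_Xs hx hy, Ds_Xs_eq_neg_I_smul hx hy, map_smul]
    _ = (1 / 2 : ℂ) • Dq f + (I * I / 2) • Dq f := by
      rw [Dy_Xs, hy, map_zero, zero_add, map_smul]
      module
    _ = 0 := by
      rw [I_mul_I]
      module

end ConstantInXY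

theorem Dx_ofQ (v : Polynomial ℂ) : Dx (ofQ v) = 0 :=
  pderiv_aeval_X_of_ne (by decide) v

theorem Dy_ofQ (v : Polynomial ℂ) : Dy (ofQ v) = 0 :=
  pderiv_aeval_X_of_ne (by decide) v

/-- For `λ = 3/4`, every `X_s v` with `v = v(q)` a one-variable polynomial is a singular
vector, annihilated by `π̂_λ(e1)` and `π̂_λ(e2)`; hence the solution space is nontrivial
and contains `X_s · ℂ[q]`. -/
theorem singular_vector_lambda_three_quarters :
    (∀ v : Polynomial ℂ, A1 (Xs (ofQ v)) = 0 ∧ A2 (Xs (ofQ v)) = 0) ∧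
    (∃ p : V, p ≠ 0 ∧ A1 p = 0 ∧ A2 p = 0) := by
  have singular (v : Polynomial ℂ) : A1 (Xs (ofQ v)) = 0 ∧ A2 (Xs (ofQ v)) = 0 :=
    ⟨A1_Xs_eq_zero (Dx_ofQ v) (Dy_ofQ v), A2_Xs_eq_zero (Dx_ofQ v) (Dy_ofQ v)⟩
  have ofQ_one_ne_zero : ofQ 1 ≠ 0 := by simp [ofQ]
  exact ⟨singular, Xs (ofQ 1), Xs_ne_zero (Dx_ofQ 1) (Dy_ofQ 1) ofQ_one_ne_zero, singular 1⟩
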